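/- arXiv:0909.0283 — 2 statements merged into one kernel-verified Lean document; each statement's English description precedes it below -/
import Mathlib

section
/- Fix a positive integer k and let λ, μ, ν ∈ [0,k]. The set T_{λ,μ}^ν is a single orbit of the diagonal conjugation action of SU(2) on SU(2)×SU(2): if (g₁,h₁) and (g₂,h₂) both lie in T_{λ,μ}^ν, then there exists x ∈ SU(2) with g₂ = x g₁ x⁻¹ and h₂ = x h₁ x⁻¹. -/
open Matrix Complex Real

noncomputable section

/-- `SU(2)`: 2×2 complex unitary matrices with determinant 1. -/
def SU2 : Set (Matrix (Fin 2) (Fin 2) ℂ) :=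
  {g | g ∈ Matrix.unitaryGroup (Fin 2) ℂ ∧ g.det = 1}

/-- The diagonal matrix `t_λ = diag(exp(iπλ/k), exp(−iπλ/k))`. -/
def tmat (k : ℕ) (l : ℝ) : Matrix (Fin 2) (Fin 2) ℂ :=
  Matrix.diagonal ![Complex.exp (Complex.I * ((Real.pi * l / k : ℝ) : ℂ)),
    Complex.exp (-(Complex.I * ((Real.pi * l / k : ℝ) : ℂ)))]

/-- The conjugacy class `C_λ` of `t_λ` in `SU(2)`. -/
def conjClass (k : ℕ) (l : ℝ) : Set (Matrix (Fin 2) (Fin 2) ℂ) :=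
  {g | ∃ x ∈ SU2, g = x * tmat k l * x⁻¹}

/-- `T_{λ,μ}^ν = {(g,h) : g ∈ C_λ, h ∈ C_μ, g·h ∈ C_ν}`. -/
def Tset (k : ℕ) (l m n : ℝ) :
    Set (Matrix (Fin 2) (Fin 2) ℂ × Matrix (Fin 2) (Fin 2) ℂ) :=
  {p | p.1 ∈ conjClass k l ∧ p.2 ∈ conjClass k m ∧ p.1 * p.2 ∈ conjClass k n}

/-!
A pair `(g, h)` in `SU(2)` is determined up to simultaneous conjugation by the traces of `g`, `h`
and `g * h`. Given two pairs with the same traces, conjugate both first entries to the same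
diagonal matrix `t`, with a common eigenvalue `z` in its upper left corner. If `z` is real, `t` is
central and it remains to conjugate the second entries, which have the same trace. Otherwise the
traces of `h` and `t * h` give the real parts of `h₀₀` and `z * h₀₀`, which determine `h₀₀` and
hence also `|h₁₀|`, and conjugation by diagonal matrices, which fixes `t`, rotates the phase of
`h₁₀` freely.
-/

open scoped ComplexConjugate

theorem exists_norm_eq_one_pow_mul_eq {n : ℕ} (hn : 0 < n) {b c : ℂ} (h : ‖b‖ = ‖c‖) :
    ∃ v : ℂ, ‖v‖ = 1 ∧ v ^ n * b = c := by
  rcases eq_or_ne b 0 with rfl | hb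
  · exact ⟨1, norm_one, by rw [mul_zero, norm_eq_zero.1 (h.symm.trans norm_zero)]⟩
  · obtain ⟨v, hv⟩ := IsAlgClosed.exists_pow_nat_eq (c / b) hn
    refine ⟨v, ?_, by rw [hv, div_mul_cancel₀ _ hb]⟩
    have hv_norm : ‖v‖ ^ n = 1 := by
      rw [← norm_pow, hv, norm_div, h, div_self (h ▸ norm_ne_zero_iff.2 hb)]
    exact (pow_eq_one_iff_of_nonneg (norm_nonneg v) hn.ne').1 hv_norm

section SpecialUnitaryGroup

variable {n α : Type*} [DecidableEq n] [Fintype n] [CommRing α] [StarRing α]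

theorem coe_inv_specialUnitaryGroup (x : specialUnitaryGroup n α) : x⁻¹.1 = x.1⁻¹ :=
  (Matrix.inv_eq_right_inv (mem_unitaryGroup_iff.1 x.2.1)).symm

theorem star_specialUnitaryGroup_eq_adjugate (x : specialUnitaryGroup n α) :
    star x.1 = x.1.adjugate := by
  have hdet : x.1.det = 1 := x.2.2
  calc star x.1 = x.1⁻¹ := coe_inv_specialUnitaryGroup x
    _ = x.1.adjugate := by rw [Matrix.inv_def, hdet, Ring.inverse_one, one_smul]

theorem coe_eq_conj_of_semiconjBy {x g g' : specialUnitaryGroup n α} (hx : SemiconjBy x g g') :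
    g'.1 = x.1 * g.1 * x.1⁻¹ := by
  rw [eq_mul_inv_of_mul_eq hx.eq.symm, Submonoid.coe_mul, Submonoid.coe_mul,
    coe_inv_specialUnitaryGroup]

theorem trace_eq_of_semiconjBy {x g g' : specialUnitaryGroup n α} (hx : SemiconjBy x g g') :
    g'.1.trace = g.1.trace :=
  calc g'.1.trace = ((x * g) * x⁻¹).1.trace := by rw [eq_mul_inv_of_mul_eq hx.eq.symm]
    _ = (x⁻¹ * (x * g)).1.trace := trace_mul_comm (x * g).1 x⁻¹.1
    _ = g.1.trace := by rw [inv_mul_cancel_left]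

end SpecialUnitaryGroup

namespace SU2

variable {g h g' h' s t : specialUnitaryGroup (Fin 2) ℂ}

theorem apply_one_one (g : specialUnitaryGroup (Fin 2) ℂ) : g.1 1 1 = conj (g.1 0 0) := by
  simpa [adjugate_fin_two, star_apply] using
    (congrFun₂ (star_specialUnitaryGroup_eq_adjugate g) 0 0).symm

theorem apply_zero_one (g : specialUnitaryGroup (Fin 2) ℂ) : g.1 0 1 = -conj (g.1 1 0) := by
  have h : conj (g.1 1 0) = -g.1 0 1 := by
    simpa [adjugate_fin_two, star_apply] using
      congrFun₂ (star_specialUnitaryGroup_eq_adjugate g) 0 1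
  rw [h, neg_neg]

theorem ext_col_zero (h₀ : g.1 0 0 = h.1 0 0) (h₁ : g.1 1 0 = h.1 1 0) : g = h := by
  ext i j
  fin_cases i <;> fin_cases j <;> simp [apply_one_one, apply_zero_one, h₀, h₁]

theorem norm_sq_add_norm_sq_eq_one (g : specialUnitaryGroup (Fin 2) ℂ) :
    ‖g.1 0 0‖ ^ 2 + ‖g.1 1 0‖ ^ 2 = 1 := by
  have hdet : g.1.det = 1 := g.2.2
  rw [det_fin_two, apply_one_one, apply_zero_one, neg_mul, sub_neg_eq_add,
    mul_conj', conj_mul'] at hdet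
  exact_mod_cast hdet

theorem trace_eq_two_mul_re (g : specialUnitaryGroup (Fin 2) ℂ) :
    g.1.trace = (2 * (g.1 0 0).re : ℝ) := by
  rw [trace_fin_two, apply_one_one, add_conj]

theorem mul_apply_zero_zero (g h : specialUnitaryGroup (Fin 2) ℂ) :
    (g * h).1 0 0 = g.1 0 0 * h.1 0 0 - conj (g.1 1 0) * h.1 1 0 := by
  rw [Submonoid.coe_mul, mul_apply, Fin.sum_univ_two, apply_zero_one, neg_mul, ← sub_eq_add_neg]

theorem mul_apply_one_zero (g h : specialUnitaryGroup (Fin 2) ℂ) :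
    (g * h).1 1 0 = g.1 1 0 * h.1 0 0 + conj (g.1 0 0) * h.1 1 0 := by
  rw [Submonoid.coe_mul, mul_apply, Fin.sum_univ_two, apply_one_one]

theorem mem_specialUnitaryGroup_of_norm_sq_add_norm_sq_eq_one {a b : ℂ}
    (hab : ‖a‖ ^ 2 + ‖b‖ ^ 2 = 1) :
    !![a, -conj b; b, conj a] ∈ specialUnitaryGroup (Fin 2) ℂ := by
  have hdet : (!![a, -conj b; b, conj a]).det = 1 := by
    rw [det_fin_two_of, neg_mul, sub_neg_eq_add, mul_conj', conj_mul']
    exact_mod_cast hab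
  have hstar : star !![a, -conj b; b, conj a] = (!![a, -conj b; b, conj a]).adjugate := by
    rw [adjugate_fin_two_of]
    ext i j
    fin_cases i <;> fin_cases j <;> simp [star_apply]
  refine mem_specialUnitaryGroup_iff.2 ⟨mem_unitaryGroup_iff.2 ?_, hdet⟩
  rw [hstar, mul_adjugate, hdet, one_smul]

theorem exists_apply_eq_of_norm_sq_add_norm_sq_eq_one {a b : ℂ} (hab : ‖a‖ ^ 2 + ‖b‖ ^ 2 = 1) :
    ∃ g : specialUnitaryGroup (Fin 2) ℂ, g.1 0 0 = a ∧ g.1 1 0 = b :=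
  ⟨⟨_, mem_specialUnitaryGroup_of_norm_sq_add_norm_sq_eq_one hab⟩, rfl, rfl⟩

theorem exists_col_zero_eq_smul {v : Fin 2 → ℂ} (hv : v ≠ 0) :
    ∃ (c : specialUnitaryGroup (Fin 2) ℂ) (r : ℂ), c.1.col 0 = r • v := by
  set r : ℝ := √(‖v 0‖ ^ 2 + ‖v 1‖ ^ 2)
  have hr_sq : r ^ 2 = ‖v 0‖ ^ 2 + ‖v 1‖ ^ 2 := Real.sq_sqrt (by positivity)
  have hr : r ^ 2 ≠ 0 := by
    contrapose! hv
    rw [hr_sq, add_eq_zero_iff_of_nonneg (sq_nonneg _) (sq_nonneg _), sq_eq_zero_iff,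
      sq_eq_zero_iff, norm_eq_zero, norm_eq_zero] at hv
    ext i
    fin_cases i
    exacts [hv.1, hv.2]
  have hunit : ‖(r : ℂ)⁻¹ * v 0‖ ^ 2 + ‖(r : ℂ)⁻¹ * v 1‖ ^ 2 = 1 := by
    simp only [norm_mul, norm_inv, norm_real, mul_pow, inv_pow, norm_eq_abs, sq_abs]
    rw [← mul_add, ← hr_sq, inv_mul_cancel₀ hr]
  obtain ⟨c, hc₀, hc₁⟩ := exists_apply_eq_of_norm_sq_add_norm_sq_eq_one hunit
  refine ⟨c, (r : ℂ)⁻¹, ?_⟩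
  ext i
  fin_cases i
  exacts [hc₀, hc₁]

theorem commute_of_apply_one_zero_eq_zero (hs : s.1 1 0 = 0) (ht : t.1 1 0 = 0) :
    Commute s t := by
  apply ext_col_zero
  · simp only [mul_apply_zero_zero, hs, ht, mul_comm]
  · simp only [mul_apply_one_zero, hs, ht, mul_zero, zero_mul]

theorem commute_of_apply_zero_zero_im_eq_zero (ht : t.1 1 0 = 0) (him : (t.1 0 0).im = 0)
    (x : specialUnitaryGroup (Fin 2) ℂ) : Commute x t := by
  have hreal : conj (t.1 0 0) = t.1 0 0 := conj_eq_iff_im.2 him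
  apply ext_col_zero
  · simp only [mul_apply_zero_zero, ht, map_zero, zero_mul, mul_comm]
  · simp only [mul_apply_one_zero, ht, hreal, zero_mul, add_zero, zero_add, mul_comm]

theorem apply_zero_zero_eq_of_trace_eq (ht : t.1 1 0 = 0) (him : (t.1 0 0).im ≠ 0)
    (htr : g.1.trace = h.1.trace) (htr_mul : (t * g).1.trace = (t * h).1.trace) :
    g.1 0 0 = h.1 0 0 := by
  simp only [trace_eq_two_mul_re, mul_apply_zero_zero, ht, map_zero, zero_mul, sub_zero,
    ofReal_inj, mul_re] at htr htr_mul
  have hre : (g.1 0 0).re = (h.1 0 0).re := by linarith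
  rw [hre] at htr_mul
  exact Complex.ext hre (mul_left_cancel₀ him (by linarith))

theorem exists_semiconjBy_of_apply_zero_zero_eq (hgh : g.1 0 0 = h.1 0 0) :
    ∃ d : specialUnitaryGroup (Fin 2) ℂ, d.1 1 0 = 0 ∧ SemiconjBy d g h := by
  have hnorm : ‖g.1 1 0‖ = ‖h.1 1 0‖ := by
    have hg := norm_sq_add_norm_sq_eq_one g
    rw [hgh, ← norm_sq_add_norm_sq_eq_one h, add_right_inj] at hg
    exact (pow_left_inj₀ (norm_nonneg _) (norm_nonneg _) two_ne_zero).1 hg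
  obtain ⟨v, hv, hvgh⟩ := exists_norm_eq_one_pow_mul_eq two_pos hnorm
  have hv_mul : v * conj v = 1 := by rw [mul_conj', hv, ofReal_one, one_pow]
  obtain ⟨d, hd₀, hd₁⟩ := exists_apply_eq_of_norm_sq_add_norm_sq_eq_one
    (a := conj v) (b := 0) (by simp [hv])
  refine ⟨d, hd₁, ext_col_zero ?_ ?_⟩
  · simp [mul_apply_zero_zero, hd₀, hd₁, hgh, mul_comm]
  · simp only [mul_apply_one_zero, hd₀, hd₁, conj_conj, ← hvgh]
    linear_combination -(v * g.1 1 0) * hv_mul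

theorem exists_semiconjBy_of_mulVec_eq_smul {z : ℂ} {v : Fin 2 → ℂ} (hv : v ≠ 0)
    (hgv : g.1 *ᵥ v = z • v) :
    ∃ a t : specialUnitaryGroup (Fin 2) ℂ, SemiconjBy a g t ∧ t.1 0 0 = z ∧ t.1 1 0 = 0 := by
  obtain ⟨c, r, hc⟩ := exists_col_zero_eq_smul hv
  have hcol : (c⁻¹ * g * c).1.col 0 = z • Pi.single 0 1 :=
    calc (c⁻¹ * g * c).1.col 0
        = c⁻¹.1 *ᵥ (g.1 *ᵥ c.1.col 0) := by
          rw [← mulVec_single_one, ← mulVec_single_one, mulVec_mulVec, mulVec_mulVec]; rfl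
      _ = z • c⁻¹.1 *ᵥ c.1.col 0 := by rw [hc, mulVec_smul, hgv, smul_comm, mulVec_smul]
      _ = z • Pi.single 0 1 := by
          rw [← mulVec_single_one, mulVec_mulVec, ← Submonoid.coe_mul, inv_mul_cancel,
            Submonoid.coe_one, one_mulVec]
  refine ⟨c⁻¹, c⁻¹ * g * c, ?_, ?_, ?_⟩
  · simpa only [inv_inv] using SemiconjBy.conj_mk c⁻¹ g
  · simpa using congrFun hcol 0
  · simpa using congrFun hcol 1

theorem exists_semiconjBy_of_isRoot_charpoly {z : ℂ} (hz : g.1.charpoly.IsRoot z) :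
    ∃ a t : specialUnitaryGroup (Fin 2) ℂ, SemiconjBy a g t ∧ t.1 0 0 = z ∧ t.1 1 0 = 0 := by
  rw [Polynomial.IsRoot, eval_charpoly] at hz
  obtain ⟨v, hv, hgv⟩ := exists_mulVec_eq_zero_iff.2 hz
  refine exists_semiconjBy_of_mulVec_eq_smul hv (sub_eq_zero.1 ?_).symm
  simpa [sub_mulVec] using hgv

theorem exists_semiconjBy_diagonal_of_trace_eq (htr : g.1.trace = g'.1.trace) :
    ∃ a b t : specialUnitaryGroup (Fin 2) ℂ,
      t.1 1 0 = 0 ∧ SemiconjBy a g t ∧ SemiconjBy b g' t := by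
  have hcharpoly : g.1.charpoly = g'.1.charpoly := by
    rw [charpoly_fin_two, charpoly_fin_two, htr, show g.1.det = 1 from g.2.2,
      show g'.1.det = 1 from g'.2.2]
  obtain ⟨z, hz⟩ := IsAlgClosed.exists_root g.1.charpoly (by simp [charpoly_degree_eq_dim])
  obtain ⟨a, t, ha, ht₀, ht₁⟩ := exists_semiconjBy_of_isRoot_charpoly hz
  obtain ⟨b, t', hb, ht'₀, ht'₁⟩ := exists_semiconjBy_of_isRoot_charpoly (hcharpoly ▸ hz)
  obtain rfl : t = t' := ext_col_zero (ht₀.trans ht'₀.symm) (ht₁.trans ht'₁.symm)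
  exact ⟨a, b, t, ht₁, ha, hb⟩

theorem exists_semiconjBy_of_trace_eq (htr : g.1.trace = g'.1.trace) :
    ∃ x : specialUnitaryGroup (Fin 2) ℂ, SemiconjBy x g g' := by
  obtain ⟨a, b, t, -, ha, hb⟩ := exists_semiconjBy_diagonal_of_trace_eq htr
  exact ⟨b⁻¹ * a, hb.inv_symm_left.mul_left ha⟩

theorem exists_commute_semiconjBy_of_trace_eq (ht : t.1 1 0 = 0)
    (htr : h.1.trace = h'.1.trace) (htr_mul : (t * h).1.trace = (t * h').1.trace) :
    ∃ d : specialUnitaryGroup (Fin 2) ℂ, Commute d t ∧ SemiconjBy d h h' := by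
  by_cases him : (t.1 0 0).im = 0
  · obtain ⟨d, hd⟩ := exists_semiconjBy_of_trace_eq htr
    exact ⟨d, commute_of_apply_zero_zero_im_eq_zero ht him d, hd⟩
  · obtain ⟨d, hd_diag, hd⟩ := exists_semiconjBy_of_apply_zero_zero_eq
      (apply_zero_zero_eq_of_trace_eq ht him htr htr_mul)
    exact ⟨d, commute_of_apply_one_zero_eq_zero hd_diag ht, hd⟩

theorem exists_semiconjBy_pair_of_trace_eq (hg : g.1.trace = g'.1.trace)
    (hh : h.1.trace = h'.1.trace) (hgh : (g * h).1.trace = (g' * h').1.trace) :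
    ∃ x : specialUnitaryGroup (Fin 2) ℂ, SemiconjBy x g g' ∧ SemiconjBy x h h' := by
  obtain ⟨a, b, t, ht, ha, hb⟩ := exists_semiconjBy_diagonal_of_trace_eq hg
  have ha' := SemiconjBy.conj_mk a h
  have hb' := SemiconjBy.conj_mk b h'
  obtain ⟨d, hdt, hd⟩ := exists_commute_semiconjBy_of_trace_eq ht
    (h := a * h * a⁻¹) (h' := b * h' * b⁻¹)
    (by rw [trace_eq_of_semiconjBy ha', trace_eq_of_semiconjBy hb', hh])
    (by rw [trace_eq_of_semiconjBy (ha.mul_right ha'), trace_eq_of_semiconjBy (hb.mul_right hb'),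
      hgh])
  exact ⟨b⁻¹ * (d * a), hb.inv_symm_left.mul_left (hdt.semiconjBy.mul_left ha),
    hb'.inv_symm_left.mul_left (hd.mul_left ha')⟩

end SU2

theorem tmat_mem_specialUnitaryGroup (k : ℕ) (l : ℝ) :
    tmat k l ∈ specialUnitaryGroup (Fin 2) ℂ := by
  set θ : ℝ := Real.pi * l / k with hθ
  have hstar : conj (Complex.exp (I * θ)) = Complex.exp (-(I * θ)) := by
    rw [← exp_conj, map_mul, conj_I, conj_ofReal, neg_mul]
  have hnorm : ‖Complex.exp (I * θ)‖ = 1 := by rw [mul_comm, norm_exp_ofReal_mul_I]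
  have htmat : tmat k l =
      !![Complex.exp (I * θ), -conj (0 : ℂ); 0, conj (Complex.exp (I * θ))] := by
    rw [hstar, tmat, ← hθ]
    ext i j
    fin_cases i <;> fin_cases j <;> simp
  rw [htmat]
  exact SU2.mem_specialUnitaryGroup_of_norm_sq_add_norm_sq_eq_one (by rw [hnorm]; norm_num)

section ConjClass

variable {k : ℕ} {l : ℝ} {g g' : Matrix (Fin 2) (Fin 2) ℂ}

theorem exists_semiconjBy_of_mem_conjClass {t : specialUnitaryGroup (Fin 2) ℂ}
    (ht : t.1 = tmat k l) (hg : g ∈ conjClass k l) :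
    ∃ x g' : specialUnitaryGroup (Fin 2) ℂ, g'.1 = g ∧ SemiconjBy x t g' := by
  obtain ⟨x, hx, rfl⟩ := hg
  lift x to specialUnitaryGroup (Fin 2) ℂ using hx
  have hconj := SemiconjBy.conj_mk x t
  exact ⟨x, x * t * x⁻¹, ht ▸ coe_eq_conj_of_semiconjBy hconj, hconj⟩

theorem mem_SU2_of_mem_conjClass (hg : g ∈ conjClass k l) : g ∈ SU2 := by
  lift tmat k l to specialUnitaryGroup (Fin 2) ℂ using tmat_mem_specialUnitaryGroup k l with t ht
  obtain ⟨_, g', rfl, -⟩ := exists_semiconjBy_of_mem_conjClass ht hg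
  exact g'.2

theorem trace_eq_of_mem_conjClass (hg : g ∈ conjClass k l) (hg' : g' ∈ conjClass k l) :
    g.trace = g'.trace := by
  lift tmat k l to specialUnitaryGroup (Fin 2) ℂ using tmat_mem_specialUnitaryGroup k l with t ht
  obtain ⟨_, g, rfl, hx⟩ := exists_semiconjBy_of_mem_conjClass ht hg
  obtain ⟨_, g', rfl, hx'⟩ := exists_semiconjBy_of_mem_conjClass ht hg'
  rw [trace_eq_of_semiconjBy hx, trace_eq_of_semiconjBy hx']

end ConjClass

theorem stmt10_general {g h g' h' : Matrix (Fin 2) (Fin 2) ℂ}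
    (hg : g ∈ SU2) (hh : h ∈ SU2) (hg' : g' ∈ SU2) (hh' : h' ∈ SU2)
    (htr_g : g.trace = g'.trace) (htr_h : h.trace = h'.trace)
    (htr_mul : (g * h).trace = (g' * h').trace) :
    ∃ x ∈ SU2, g' = x * g * x⁻¹ ∧ h' = x * h * x⁻¹ := by
  lift g to specialUnitaryGroup (Fin 2) ℂ using hg
  lift h to specialUnitaryGroup (Fin 2) ℂ using hh
  lift g' to specialUnitaryGroup (Fin 2) ℂ using hg'
  lift h' to specialUnitaryGroup (Fin 2) ℂ using hh'
  obtain ⟨x, hxg, hxh⟩ := SU2.exists_semiconjBy_pair_of_trace_eq htr_g htr_h htr_mul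
  exact ⟨x, x.2, coe_eq_conj_of_semiconjBy hxg, coe_eq_conj_of_semiconjBy hxh⟩

theorem stmt10 (k : ℕ) (hk : 0 < k) (lam mu nu : ℝ)
    (hlam : lam ∈ Set.Icc (0:ℝ) k) (hmu : mu ∈ Set.Icc (0:ℝ) k)
    (hnu : nu ∈ Set.Icc (0:ℝ) k)
    (p q : Matrix (Fin 2) (Fin 2) ℂ × Matrix (Fin 2) (Fin 2) ℂ)
    (hp : p ∈ Tset k lam mu nu) (hq : q ∈ Tset k lam mu nu) :
    ∃ x ∈ SU2, q.1 = x * p.1 * x⁻¹ ∧ q.2 = x * p.2 * x⁻¹ :=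
  stmt10_general (mem_SU2_of_mem_conjClass hp.1) (mem_SU2_of_mem_conjClass hp.2.1)
    (mem_SU2_of_mem_conjClass hq.1) (mem_SU2_of_mem_conjClass hq.2.1)
    (trace_eq_of_mem_conjClass hp.1 hq.1) (trace_eq_of_mem_conjClass hp.2.1 hq.2.1)
    (trace_eq_of_mem_conjClass hp.2.2 hq.2.2)
end
end

section
/- Fix a positive integer k and let λ, μ, ν ∈ [0,k] satisfy the strict inequalities |λ−μ| < ν < min(λ+μ, 2k−λ−μ). Let θ ∈ [0, π/2] be such that sin²θ = ( cos(πν/k) − cos(π(λ+μ)/k) ) / ( 2 sin(πλ/k) sin(πμ/k) ) and set a = e^{iθσ₂}. Then the map from SU(2) to T_{λ,μ}^ν sending h to ( h t_λ h⁻¹, (h·a) t_μ (h·a)⁻¹ ) is surjective, and for all h, h' ∈ SU(2) it takes the same value at h and h' if and only if h' = h or h' = −h. -/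
open Matrix Complex Real

noncomputable section

/-- The rotation matrix `e^{iθσ₂} = [[cos θ, sin θ],[−sin θ, cos θ]]`. -/
def rotY (θ : ℝ) : Matrix (Fin 2) (Fin 2) ℂ :=
  !![((Real.cos θ : ℝ) : ℂ), ((Real.sin θ : ℝ) : ℂ);
     ((-(Real.sin θ) : ℝ) : ℂ), ((Real.cos θ : ℝ) : ℂ)]

/-!
`SU(2)` acts on pairs of matrices by simultaneous conjugation, and the map of the theorem is the
orbit map of `(t_λ, a t_μ a⁻¹)`. Conjugacy classes of `SU(2)` are level sets of the trace, and for
`z ∈ SU(2)` the trace of `t_λ z t_μ z⁻¹` is a function of `|z₀₁|²` alone. Hence every point of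
`T_{λ,μ}^ν` is `(x t_λ x⁻¹, (x z) t_μ (x z)⁻¹)` with `|z₀₁|² = sin² θ`. The Euler angle
decomposition writes such a `z` as `d a d'` with `d` and `d'` diagonal; since diagonal matrices
commute with `t_λ` and `t_μ`, the point is the image of `x d`. An element that fixes
`(t_λ, a t_μ a⁻¹)` commutes with `t_λ`, hence is diagonal, and it commutes with `a t_μ a⁻¹`, which
has a nonzero off-diagonal entry, hence it is `±1`.

The relation between `θ` and `λ, μ, ν` is the spherical law of cosines: `πλ/k`, `πμ/k` and `πν/k`
are the sides of a spherical triangle whose angle opposite to `πν/k` is `π - 2θ`.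
-/

open scoped ComplexConjugate

section Conjugation

variable {n R : Type*} [Fintype n] [DecidableEq n] [CommRing R] {h w : Matrix n n R}

theorem mul_conj_eq_conj_conj (h w t : Matrix n n R) :
    h * w * t * (h * w)⁻¹ = h * (w * t * w⁻¹) * h⁻¹ := by
  simp only [Matrix.mul_inv_rev, mul_assoc]

theorem conj_mul_conj (hh : IsUnit h.det) (s t : Matrix n n R) :
    h * s * h⁻¹ * (h * t * h⁻¹) = h * (s * t) * h⁻¹ := by
  simp only [mul_assoc, Matrix.nonsing_inv_mul_cancel_left h _ hh]

theorem mul_conj_eq_conj_iff_commute (hh : IsUnit h.det) (hw : IsUnit w.det) {t : Matrix n n R} :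
    h * w * t * (h * w)⁻¹ = h * t * h⁻¹ ↔ Commute w t := by
  let := Matrix.invertibleOfIsUnitDet h hh
  let := Matrix.invertibleOfIsUnitDet w hw
  rw [mul_conj_eq_conj_conj, Matrix.mul_inv_eq_iff_eq_mul_of_invertible,
    Matrix.inv_mul_cancel_right_of_invertible, Matrix.mul_right_inj_of_invertible,
    Matrix.mul_inv_eq_iff_eq_mul_of_invertible]
  rfl

end Conjugation

/-- The real quaternion with complex coordinates `p, q`, as the matrix `[[p, q], [-q̄, p̄]]`. The
matrices with `|p|² + |q|² = 1` are the elements of `SU(2)`. -/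
def suMat (p q : ℂ) : Matrix (Fin 2) (Fin 2) ℂ :=
  !![p, q; -conj q, conj p]

theorem suMat_mul (p q r s : ℂ) :
    suMat p q * suMat r s = suMat (p * r - q * conj s) (p * s + q * conj r) := by
  simp only [suMat, Matrix.mul_fin_two, map_add, map_sub, map_mul, conj_conj]
  ring_nf

theorem suMat_inj {p q r s : ℂ} : suMat p q = suMat r s ↔ p = r ∧ q = s := by
  refine ⟨fun h => ⟨?_, ?_⟩, fun h => by rw [h.1, h.2]⟩
  · simpa [suMat] using congrFun (congrFun h 0) 0
  · simpa [suMat] using congrFun (congrFun h 0) 1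

theorem suMat_one_zero : suMat 1 0 = 1 := by
  ext i j
  fin_cases i <;> fin_cases j <;> simp [suMat]

theorem neg_suMat (p q : ℂ) : -suMat p q = suMat (-p) (-q) := by
  ext i j
  fin_cases i <;> fin_cases j <;> simp [suMat]

theorem ofReal_smul_suMat (r : ℝ) (p q : ℂ) : (r : ℂ) • suMat p q = suMat (r * p) (r * q) := by
  ext i j
  fin_cases i <;> fin_cases j <;> simp [suMat]

theorem star_suMat (p q : ℂ) : star (suMat p q) = suMat (conj p) (-q) := by
  ext i j
  fin_cases i <;> fin_cases j <;> simp [suMat, Matrix.star_apply]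

theorem det_suMat (p q : ℂ) : (suMat p q).det = (normSq p + normSq q : ℝ) := by
  rw [suMat, Matrix.det_fin_two_of, mul_neg, sub_neg_eq_add, mul_conj, mul_conj, ofReal_add]

theorem trace_suMat (p q : ℂ) : (suMat p q).trace = (2 * p.re : ℝ) := by
  rw [suMat, Matrix.trace_fin_two_of, Complex.add_conj]

theorem suMat_mul_star (p q : ℂ) :
    suMat p q * star (suMat p q) = ((normSq p + normSq q : ℝ) : ℂ) • 1 := by
  rw [star_suMat, suMat_mul, ← suMat_one_zero, ofReal_smul_suMat, suMat_inj, map_neg, mul_neg,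
    mul_conj, mul_conj, conj_conj, ofReal_add]
  constructor <;> ring

theorem suMat_mem_SU2_iff {p q : ℂ} : suMat p q ∈ SU2 ↔ normSq p + normSq q = 1 := by
  refine ⟨fun h => ?_, fun h => ⟨?_, ?_⟩⟩
  · have hdet := h.2
    rw [det_suMat] at hdet
    exact_mod_cast hdet
  · rw [Matrix.mem_unitaryGroup_iff, suMat_mul_star, h, ofReal_one, one_smul]
  · rw [det_suMat, h, ofReal_one]

theorem exists_eq_suMat_of_mem_SU2 {g : Matrix (Fin 2) (Fin 2) ℂ} (hg : g ∈ SU2) :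
    ∃ p q : ℂ, g = suMat p q := by
  obtain ⟨hunitary, hdet⟩ := hg
  have hadj : star g = g.adjugate :=
    left_inv_eq_right_inv (Matrix.mem_unitaryGroup_iff'.mp hunitary)
      (by rw [Matrix.mul_adjugate, hdet, one_smul])
  have h00 := congrFun (congrFun hadj 0) 0
  have h01 := congrFun (congrFun hadj 0) 1
  simp only [Matrix.star_apply, Matrix.adjugate_fin_two, Matrix.of_apply, Matrix.cons_val',
    Matrix.cons_val_zero, Matrix.cons_val_one, Matrix.cons_val_fin_one, RCLike.star_def]
    at h00 h01
  have h10 : g 1 0 = -conj (g 0 1) := by simpa using congrArg conj h01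
  refine ⟨g 0 0, g 0 1, ?_⟩
  ext i j
  fin_cases i <;> fin_cases j <;> simp [suMat, h00, h10]

section SU2

variable {g h : Matrix (Fin 2) (Fin 2) ℂ}

theorem isUnit_det_of_mem_SU2 (hg : g ∈ SU2) : IsUnit g.det :=
  hg.2 ▸ isUnit_one

theorem isUnit_of_mem_SU2 (hg : g ∈ SU2) : IsUnit g :=
  (Matrix.isUnit_iff_isUnit_det g).mpr (isUnit_det_of_mem_SU2 hg)

theorem inv_eq_star_of_mem_SU2 (hg : g ∈ SU2) : g⁻¹ = star g :=
  Matrix.inv_eq_right_inv (Matrix.mem_unitaryGroup_iff.mp hg.1)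

theorem mul_mem_SU2 (hg : g ∈ SU2) (hh : h ∈ SU2) : g * h ∈ SU2 :=
  (Matrix.specialUnitaryGroup (Fin 2) ℂ).mul_mem hg hh

theorem inv_mem_SU2 (hg : g ∈ SU2) : g⁻¹ ∈ SU2 := by
  rw [inv_eq_star_of_mem_SU2 hg]
  exact (star (⟨g, hg⟩ : Matrix.specialUnitaryGroup (Fin 2) ℂ)).2

theorem conj_mem_SU2 (hh : h ∈ SU2) (hg : g ∈ SU2) : h * g * h⁻¹ ∈ SU2 :=
  mul_mem_SU2 (mul_mem_SU2 hh hg) (inv_mem_SU2 hh)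

end SU2

theorem commute_suMat_diagonal_iff {e p q : ℂ} :
    Commute (suMat e 0) (suMat p q) ↔ e.im = 0 ∨ q = 0 := by
  rw [commute_iff_eq, suMat_mul, suMat_mul, suMat_inj]
  simp only [zero_mul, sub_zero, add_zero, map_zero, mul_zero, zero_add, mul_comm p e, true_and]
  rw [mul_comm q, mul_eq_mul_right_iff, eq_comm, Complex.conj_eq_iff_im]

theorem commute_and_commute_iff_eq_one_or_neg_one {w : Matrix (Fin 2) (Fin 2) ℂ} (hw : w ∈ SU2)
    {d r s : ℂ} (hd : d.im ≠ 0) (hs : s ≠ 0) :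
    Commute w (suMat d 0) ∧ Commute w (suMat r s) ↔ w = 1 ∨ w = -1 := by
  refine ⟨fun ⟨hdiag, hoff⟩ => ?_, ?_⟩
  · obtain ⟨p, q, rfl⟩ := exists_eq_suMat_of_mem_SU2 hw
    obtain rfl : q = 0 := (commute_suMat_diagonal_iff.mp hdiag.symm).resolve_left hd
    have him : p.im = 0 := (commute_suMat_diagonal_iff.mp hoff).resolve_right hs
    have hre : p.re * p.re = 1 := by
      simpa [normSq_apply, him] using suMat_mem_SU2_iff.mp hw
    rw [← suMat_one_zero, neg_suMat, neg_zero, suMat_inj, suMat_inj]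
    exact (mul_self_eq_one_iff.mp hre).imp (fun hp => ⟨Complex.ext hp him, rfl⟩)
      (fun hp => ⟨Complex.ext hp (by simpa using him), rfl⟩)
  · rintro (rfl | rfl)
    · exact ⟨Commute.one_left _, Commute.one_left _⟩
    · exact ⟨Commute.neg_one_left _, Commute.neg_one_left _⟩

theorem suMat_conj_diagonal {p q : ℂ} (h : suMat p q ∈ SU2) (e : ℂ) :
    suMat p q * suMat e 0 * (suMat p q)⁻¹ =
      suMat (normSq p * e + normSq q * conj e) (p * q * (conj e - e)) := by
  rw [inv_eq_star_of_mem_SU2 h, star_suMat, suMat_mul, suMat_mul, suMat_inj]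
  simp only [map_zero, map_neg, conj_conj, normSq_eq_conj_mul_self]
  constructor <;> ring

theorem trace_diagonal_mul_conj_diagonal {p q : ℂ} (h : suMat p q ∈ SU2) (d e : ℂ) :
    (suMat d 0 * (suMat p q * suMat e 0 * (suMat p q)⁻¹)).trace =
      (2 * (d.re * e.re - d.im * e.im * (1 - 2 * normSq q)) : ℝ) := by
  have hp : normSq p = 1 - normSq q := eq_sub_of_add_eq (suMat_mem_SU2_iff.mp h)
  rw [suMat_conj_diagonal h, suMat_mul, trace_suMat, hp]
  congr 2
  simp only [zero_mul, sub_zero, mul_re, add_re, add_im, im_ofReal_mul, conj_re, conj_im, ofReal_re,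
    ofReal_im]
  ring

theorem exists_mem_SU2_eq_conj_of_mul_eq_mul {g t : Matrix (Fin 2) (Fin 2) ℂ} {u v : ℂ}
    (huv : u ≠ 0 ∨ v ≠ 0) (h : g * suMat u v = suMat u v * t) :
    ∃ x ∈ SU2, g = x * t * x⁻¹ := by
  have hpos : 0 < normSq u + normSq v := by
    rcases huv with hu | hv
    · exact add_pos_of_pos_of_nonneg (normSq_pos.mpr hu) (normSq_nonneg v)
    · exact add_pos_of_nonneg_of_pos (normSq_nonneg u) (normSq_pos.mpr hv)
  set r : ℝ := (√(normSq u + normSq v))⁻¹ with hr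
  have hmem : (r : ℂ) • suMat u v ∈ SU2 := by
    rw [ofReal_smul_suMat, suMat_mem_SU2_iff, map_mul, map_mul, normSq_ofReal, ← mul_add, hr,
      ← mul_inv, Real.mul_self_sqrt hpos.le, inv_mul_cancel₀ hpos.ne']
  refine ⟨_, hmem, ?_⟩
  rw [smul_mul_assoc, ← h, ← mul_smul_comm,
    Matrix.mul_nonsing_inv_cancel_right _ _ (isUnit_det_of_mem_SU2 hmem)]

theorem exists_conj_diagonal_eq_suMat {p q e : ℂ} (hg : suMat p q ∈ SU2) (ht : suMat e 0 ∈ SU2)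
    (hre : p.re = e.re) : ∃ x ∈ SU2, suMat p q = x * suMat e 0 * x⁻¹ := by
  -- By Cayley-Hamilton, `g - t⁻¹` intertwines `g = suMat p q` and `t = suMat e 0`, which have the
  -- same trace; it vanishes only if `g = t⁻¹`, and then the Weyl element `suMat 0 1` does.
  by_cases hX : p = conj e ∧ q = 0
  · obtain ⟨rfl, rfl⟩ := hX
    refine exists_mem_SU2_eq_conj_of_mul_eq_mul (u := 0) (v := 1) (Or.inr one_ne_zero) ?_
    simp [suMat_mul]
  · rw [not_and_or, ← sub_eq_zero] at hX
    refine exists_mem_SU2_eq_conj_of_mul_eq_mul hX ?_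
    have hpe : p + conj p = e + conj e := by rw [add_conj, add_conj, hre]
    have hpq : p * conj p + q * conj q = 1 := by
      rw [mul_conj, mul_conj]
      exact_mod_cast suMat_mem_SU2_iff.mp hg
    have hee : e * conj e = 1 := by
      rw [mul_conj]
      exact_mod_cast (by simpa using suMat_mem_SU2_iff.mp ht : normSq e = 1)
    rw [suMat_mul, suMat_mul, suMat_inj]
    simp only [map_sub, conj_conj, map_zero, mul_zero, sub_zero, zero_add]
    constructor
    · linear_combination p * hpe - hpq + hee
    · linear_combination q * hpe

theorem exists_eq_ofReal_mul_exp {z : ℂ} {c : ℝ} (h : normSq z = c ^ 2) :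
    ∃ φ : ℝ, z = c * Complex.exp (φ * I) := by
  have hz : ‖z‖ = |c| := by
    rw [← abs_of_nonneg (norm_nonneg z), ← sq_eq_sq_iff_abs_eq_abs, Complex.sq_norm, h]
  rcases abs_choice c with hc | hc
  · exact ⟨z.arg, by rw [← hc, ← hz, norm_mul_exp_arg_mul_I]⟩
  · refine ⟨z.arg + Real.pi, ?_⟩
    rw [ofReal_add, add_mul, Complex.exp_add, Complex.exp_pi_mul_I, mul_neg_one, mul_neg, ← neg_mul,
      ← ofReal_neg, ← hc, ← hz, norm_mul_exp_arg_mul_I]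

theorem suMat_diagonal_exp_mem_SU2 (φ : ℝ) : suMat (Complex.exp (φ * I)) 0 ∈ SU2 := by
  rw [suMat_mem_SU2_iff, normSq_eq_norm_sq, norm_exp_ofReal_mul_I, map_zero, one_pow, add_zero]

theorem suMat_euler_angles (c s φ ψ : ℝ) :
    suMat (c * Complex.exp (φ * I)) (s * Complex.exp (ψ * I)) =
      suMat (Complex.exp (((φ + ψ) / 2 : ℝ) * I)) 0 * suMat c s *
        suMat (Complex.exp (((φ - ψ) / 2 : ℝ) * I)) 0 := by
  rw [suMat_mul, suMat_mul, suMat_inj]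
  simp only [zero_mul, sub_zero, add_zero, map_zero, mul_zero, zero_add, ← Complex.exp_conj,
    map_mul, conj_ofReal, conj_I]
  constructor
  · rw [mul_comm _ (c : ℂ), mul_assoc, ← Complex.exp_add]
    congr 2
    push_cast
    ring
  · rw [mul_comm _ (s : ℂ), mul_assoc, ← Complex.exp_add]
    congr 2
    push_cast
    ring

theorem rotY_eq_suMat (θ : ℝ) : rotY θ = suMat (Real.cos θ : ℝ) (Real.sin θ : ℝ) := by
  ext i j
  fin_cases i <;> fin_cases j <;> simp only [suMat, rotY, conj_ofReal, ofReal_neg]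

theorem rotY_mem_SU2 (θ : ℝ) : rotY θ ∈ SU2 := by
  rw [rotY_eq_suMat, suMat_mem_SU2_iff, normSq_ofReal, normSq_ofReal, ← sq, ← sq,
    Real.cos_sq_add_sin_sq]

theorem tmat_eq_suMat (k : ℕ) (l : ℝ) :
    tmat k l = suMat (Complex.exp ((Real.pi * l / k : ℝ) * I)) 0 := by
  ext i j
  fin_cases i <;> fin_cases j <;> simp [tmat, suMat, ← Complex.exp_conj, mul_comm I]

theorem tmat_mem_SU2 (k : ℕ) (l : ℝ) : tmat k l ∈ SU2 :=
  tmat_eq_suMat k l ▸ suMat_diagonal_exp_mem_SU2 _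

theorem commute_diagonal_tmat (e : ℂ) (k : ℕ) (l : ℝ) : Commute (suMat e 0) (tmat k l) := by
  rw [tmat_eq_suMat]
  exact commute_suMat_diagonal_iff.mpr (Or.inr rfl)

theorem trace_tmat (k : ℕ) (l : ℝ) :
    (tmat k l).trace = (2 * Real.cos (Real.pi * l / k) : ℝ) := by
  rw [tmat_eq_suMat, trace_suMat, exp_ofReal_mul_I_re]

theorem mem_conjClass_iff {k : ℕ} {l : ℝ} {g : Matrix (Fin 2) (Fin 2) ℂ} :
    g ∈ conjClass k l ↔ g ∈ SU2 ∧ g.trace = (2 * Real.cos (Real.pi * l / k) : ℝ) := by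
  constructor
  · rintro ⟨x, hx, rfl⟩
    exact ⟨conj_mem_SU2 hx (tmat_mem_SU2 k l),
      (Matrix.trace_conj (isUnit_of_mem_SU2 hx) _).trans (trace_tmat k l)⟩
  · rintro ⟨hg, htrace⟩
    obtain ⟨p, q, rfl⟩ := exists_eq_suMat_of_mem_SU2 hg
    have hre : p.re = Real.cos (Real.pi * l / k) := by
      rw [trace_suMat, ofReal_inj] at htrace
      linarith
    rw [conjClass, tmat_eq_suMat]
    exact exists_conj_diagonal_eq_suMat hg (suMat_diagonal_exp_mem_SU2 _)
      (by rw [hre, exp_ofReal_mul_I_re])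

/-- The pair `(h t_λ h⁻¹, (h a) t_μ (h a)⁻¹)`, the value at `h` of the map of the theorem, for an
arbitrary matrix `a` in place of `e^{iθσ₂}`. -/
def conjPair (k : ℕ) (l m : ℝ) (a h : Matrix (Fin 2) (Fin 2) ℂ) :
    Matrix (Fin 2) (Fin 2) ℂ × Matrix (Fin 2) (Fin 2) ℂ :=
  (h * tmat k l * h⁻¹, h * a * tmat k m * (h * a)⁻¹)

section conjPair

variable {k : ℕ} {l m n θ : ℝ} {a h : Matrix (Fin 2) (Fin 2) ℂ}

theorem conjPair_mem_Tset_iff_trace (ha : a ∈ SU2) (hh : h ∈ SU2) :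
    conjPair k l m a h ∈ Tset k l m n ↔
      (tmat k l * (a * tmat k m * a⁻¹)).trace = (2 * Real.cos (Real.pi * n / k) : ℝ) := by
  have hfst : h * tmat k l * h⁻¹ ∈ conjClass k l := ⟨h, hh, rfl⟩
  have hsnd : h * a * tmat k m * (h * a)⁻¹ ∈ conjClass k m := ⟨h * a, mul_mem_SU2 hh ha, rfl⟩
  have hmul : h * tmat k l * h⁻¹ * (h * a * tmat k m * (h * a)⁻¹) ∈ SU2 :=
    mul_mem_SU2 (mem_conjClass_iff.mp hfst).1 (mem_conjClass_iff.mp hsnd).1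
  have htrace : (h * tmat k l * h⁻¹ * (h * a * tmat k m * (h * a)⁻¹)).trace =
      (tmat k l * (a * tmat k m * a⁻¹)).trace := by
    rw [mul_conj_eq_conj_conj, conj_mul_conj (isUnit_det_of_mem_SU2 hh),
      Matrix.trace_conj (isUnit_of_mem_SU2 hh)]
  rw [← htrace]
  exact ⟨fun hT => (mem_conjClass_iff.mp hT.2.2).2,
    fun ht => ⟨hfst, hsnd, mem_conjClass_iff.mpr ⟨hmul, ht⟩⟩⟩

theorem conjPair_suMat_mem_Tset_iff {p q : ℂ} (ha : suMat p q ∈ SU2) (hh : h ∈ SU2) :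
    conjPair k l m (suMat p q) h ∈ Tset k l m n ↔
      Real.cos (Real.pi * n / k) = Real.cos (Real.pi * l / k) * Real.cos (Real.pi * m / k) -
        Real.sin (Real.pi * l / k) * Real.sin (Real.pi * m / k) * (1 - 2 * normSq q) := by
  rw [conjPair_mem_Tset_iff_trace ha hh, tmat_eq_suMat, tmat_eq_suMat,
    trace_diagonal_mul_conj_diagonal ha, ofReal_inj, mul_right_inj' two_ne_zero, eq_comm]
  simp only [exp_ofReal_mul_I_re, exp_ofReal_mul_I_im]

theorem conjPair_rotY_mem_Tset_iff (hh : h ∈ SU2) :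
    conjPair k l m (rotY θ) h ∈ Tset k l m n ↔
      Real.cos (Real.pi * n / k) = Real.cos (Real.pi * l / k) * Real.cos (Real.pi * m / k) -
        Real.sin (Real.pi * l / k) * Real.sin (Real.pi * m / k) * Real.cos (2 * θ) := by
  have ha := rotY_mem_SU2 θ
  rw [rotY_eq_suMat] at ha ⊢
  rw [conjPair_suMat_mem_Tset_iff ha hh, normSq_ofReal, ← sq, Real.cos_two_mul, Real.cos_sq']
  ring_nf

theorem conjPair_diagonal_mul_mul_diagonal {d e : ℂ} (hd : suMat d 0 ∈ SU2) (he : suMat e 0 ∈ SU2)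
    (ha : a ∈ SU2) (hh : h ∈ SU2) :
    conjPair k l m (suMat d 0 * a * suMat e 0) h = conjPair k l m a (h * suMat d 0) := by
  have hda := mul_mem_SU2 (mul_mem_SU2 hh hd) ha
  refine Prod.ext ((mul_conj_eq_conj_iff_commute (isUnit_det_of_mem_SU2 hh)
    (isUnit_det_of_mem_SU2 hd)).mpr (commute_diagonal_tmat d k l)).symm ?_
  simpa only [conjPair, mul_assoc] using (mul_conj_eq_conj_iff_commute (isUnit_det_of_mem_SU2 hda)
    (isUnit_det_of_mem_SU2 he)).mpr (commute_diagonal_tmat e k m)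

theorem exists_conjPair_rotY_eq {p q : ℂ} (ha : suMat p q ∈ SU2) (hq : normSq q = Real.sin θ ^ 2)
    (hh : h ∈ SU2) :
    ∃ h' ∈ SU2, conjPair k l m (suMat p q) h = conjPair k l m (rotY θ) h' := by
  have hp : normSq p = Real.cos θ ^ 2 := by
    rw [Real.cos_sq', ← hq, ← suMat_mem_SU2_iff.mp ha, add_sub_cancel_right]
  obtain ⟨φ, rfl⟩ := exists_eq_ofReal_mul_exp hp
  obtain ⟨ψ, rfl⟩ := exists_eq_ofReal_mul_exp hq
  refine ⟨_, mul_mem_SU2 hh (suMat_diagonal_exp_mem_SU2 ((φ + ψ) / 2)), ?_⟩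
  rw [suMat_euler_angles, ← rotY_eq_suMat]
  exact conjPair_diagonal_mul_mul_diagonal (suMat_diagonal_exp_mem_SU2 _)
    (suMat_diagonal_exp_mem_SU2 _) (rotY_mem_SU2 θ) hh

theorem surjOn_conjPair_rotY (hl : Real.sin (Real.pi * l / k) ≠ 0)
    (hm : Real.sin (Real.pi * m / k) ≠ 0)
    (hn : Real.cos (Real.pi * n / k) = Real.cos (Real.pi * l / k) * Real.cos (Real.pi * m / k) -
      Real.sin (Real.pi * l / k) * Real.sin (Real.pi * m / k) * Real.cos (2 * θ)) :
    Set.SurjOn (conjPair k l m (rotY θ)) SU2 (Tset k l m n) := by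
  rintro ⟨g₁, g₂⟩ hT
  obtain ⟨x, hx, rfl : g₁ = _⟩ := hT.1
  obtain ⟨y, hy, rfl : g₂ = _⟩ := hT.2.1
  have hz : x⁻¹ * y ∈ SU2 := mul_mem_SU2 (inv_mem_SU2 hx) hy
  have hxz : x * (x⁻¹ * y) = y := Matrix.mul_nonsing_inv_cancel_left x y (isUnit_det_of_mem_SU2 hx)
  obtain ⟨p, q, hpq⟩ := exists_eq_suMat_of_mem_SU2 hz
  rw [hpq] at hz hxz
  have hpair : conjPair k l m (suMat p q) x = (x * tmat k l * x⁻¹, y * tmat k m * y⁻¹) := by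
    rw [conjPair, hxz]
  rw [← hpair] at hT ⊢
  have hcos := hn.symm.trans ((conjPair_suMat_mem_Tset_iff hz hx).mp hT)
  rw [sub_right_inj, mul_right_inj' (mul_ne_zero hl hm), Real.cos_two_mul, Real.cos_sq'] at hcos
  obtain ⟨h, hh, heq⟩ := exists_conjPair_rotY_eq (k := k) (l := l) (m := m) hz
    (by linarith : normSq q = Real.sin θ ^ 2) hx
  exact ⟨h, hh, heq.symm⟩

theorem conjPair_mul_eq_conjPair_iff_commute {w : Matrix (Fin 2) (Fin 2) ℂ} (hh : h ∈ SU2)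
    (hw : w ∈ SU2) :
    conjPair k l m a (h * w) = conjPair k l m a h ↔
      Commute w (tmat k l) ∧ Commute w (a * tmat k m * a⁻¹) := by
  simp only [conjPair, Prod.mk.injEq, mul_conj_eq_conj_conj _ a]
  rw [mul_conj_eq_conj_iff_commute (isUnit_det_of_mem_SU2 hh) (isUnit_det_of_mem_SU2 hw),
    mul_conj_eq_conj_iff_commute (isUnit_det_of_mem_SU2 hh) (isUnit_det_of_mem_SU2 hw)]

theorem exists_rotY_conj_tmat_eq (hm : Real.sin (Real.pi * m / k) ≠ 0)
    (hθ : Real.sin (2 * θ) ≠ 0) :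
    ∃ r s : ℂ, s ≠ 0 ∧ rotY θ * tmat k m * (rotY θ)⁻¹ = suMat r s := by
  have ha := rotY_mem_SU2 θ
  rw [rotY_eq_suMat] at ha ⊢
  rw [tmat_eq_suMat, suMat_conj_diagonal ha]
  refine ⟨_, _, mul_ne_zero ?_ ?_, rfl⟩
  · rw [Real.sin_two_mul, mul_assoc, mul_comm (Real.sin θ)] at hθ
    exact_mod_cast right_ne_zero_of_mul hθ
  · rw [sub_ne_zero, ne_eq, Complex.conj_eq_iff_im, exp_ofReal_mul_I_im]
    exact hm

theorem conjPair_rotY_eq_iff {h' : Matrix (Fin 2) (Fin 2) ℂ}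
    (hl : Real.sin (Real.pi * l / k) ≠ 0) (hm : Real.sin (Real.pi * m / k) ≠ 0)
    (hθ : Real.sin (2 * θ) ≠ 0) (hh : h ∈ SU2) (hh' : h' ∈ SU2) :
    conjPair k l m (rotY θ) h = conjPair k l m (rotY θ) h' ↔ h' = h ∨ h' = -h := by
  obtain ⟨w, hw, rfl⟩ : ∃ w ∈ SU2, h' = h * w :=
    ⟨h⁻¹ * h', mul_mem_SU2 (inv_mem_SU2 hh) hh',
      (Matrix.mul_nonsing_inv_cancel_left h h' (isUnit_det_of_mem_SU2 hh)).symm⟩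
  obtain ⟨r, s, hs, hrs⟩ := exists_rotY_conj_tmat_eq hm hθ
  have hcancel (v : Matrix (Fin 2) (Fin 2) ℂ) : h * w = h * v ↔ w = v :=
    (isUnit_of_mem_SU2 hh).mul_right_inj
  rw [eq_comm, conjPair_mul_eq_conjPair_iff_commute hh hw, hrs, tmat_eq_suMat,
    commute_and_commute_iff_eq_one_or_neg_one hw (by rwa [exp_ofReal_mul_I_im]) hs,
    ← hcancel, ← hcancel, mul_one, mul_neg_one]

end conjPair

section Triangle

variable {α β γ δ θ : ℝ}

theorem sin_pos_of_abs_sub_lt (h₁ : |α - β| < γ) (h₂ : γ < α + β)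
    (h₃ : γ < 2 * Real.pi - α - β) : 0 < Real.sin α := by
  obtain ⟨h, h'⟩ := abs_lt.mp h₁
  exact Real.sin_pos_of_pos_of_lt_pi (by linarith) (by linarith)

theorem cos_add_lt_cos_of_abs_sub_lt (h₁ : |α - β| < γ) (h₂ : γ < α + β)
    (h₃ : γ < 2 * Real.pi - α - β) : Real.cos (α + β) < Real.cos γ := by
  have hγ : 0 < γ := (abs_nonneg _).trans_lt h₁
  have hadd : 0 < Real.sin ((α + β + γ) / 2) :=
    Real.sin_pos_of_pos_of_lt_pi (by linarith) (by linarith)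
  have hsub : 0 < Real.sin ((α + β - γ) / 2) :=
    Real.sin_pos_of_pos_of_lt_pi (by linarith) (by linarith)
  rw [← sub_neg, Real.cos_sub_cos, neg_mul, neg_mul, neg_lt_zero]
  positivity

theorem cos_lt_cos_sub_of_abs_sub_lt (h₁ : |α - β| < γ) (hγ : γ ≤ Real.pi) :
    Real.cos γ < Real.cos (α - β) := by
  rw [← Real.cos_abs (α - β)]
  exact Real.cos_lt_cos_of_nonneg_of_le_pi (abs_nonneg _) hγ h₁

theorem cos_eq_of_sin_sq_eq (hα : Real.sin α ≠ 0) (hβ : Real.sin β ≠ 0)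
    (h : Real.sin θ ^ 2 =
      (Real.cos γ - Real.cos (α + β)) / (2 * Real.sin α * Real.sin β)) :
    Real.cos γ =
      Real.cos α * Real.cos β - Real.sin α * Real.sin β * Real.cos (2 * θ) := by
  rw [eq_div_iff (mul_ne_zero (mul_ne_zero two_ne_zero hα) hβ), Real.cos_add] at h
  rw [Real.cos_two_mul, Real.cos_sq']
  linear_combination -h

theorem sin_ne_zero_of_cos_eq
    (h : Real.cos γ = Real.cos α * Real.cos β - Real.sin α * Real.sin β * Real.cos δ)
    (hadd : Real.cos γ ≠ Real.cos (α + β)) (hsub : Real.cos γ ≠ Real.cos (α - β)) :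
    Real.sin δ ≠ 0 := by
  intro hδ
  rcases Real.sin_eq_zero_iff_cos_eq.mp hδ with hcos | hcos
  · exact hadd (by rw [h, hcos, Real.cos_add, mul_one])
  · exact hsub (by rw [h, hcos, Real.cos_sub, mul_neg_one, sub_neg_eq_add])

theorem mul_div_triangle_inequalities {c k l m n : ℝ} (hc : 0 < c) (hk : 0 < k)
    (h₁ : |l - m| < n) (h₂ : n < min (l + m) (2 * k - l - m)) :
    |c * l / k - c * m / k| < c * n / k ∧ c * n / k < c * l / k + c * m / k ∧
      c * n / k < 2 * c - c * l / k - c * m / k := by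
  obtain ⟨hadd, hsub⟩ := lt_min_iff.mp h₂
  refine ⟨?_, ?_, ?_⟩
  · rw [← sub_div, ← mul_sub, abs_div, abs_mul, abs_of_pos hc, abs_of_pos hk]
    gcongr
  · rw [← add_div, ← mul_add]
    gcongr
  · calc c * n / k < c * (2 * k - l - m) / k := by gcongr
      _ = 2 * c - c * l / k - c * m / k := by field_simp

theorem nondegenerate_of_triangle_inequalities {k l m n : ℝ} (hk : 0 < k) (h₁ : |l - m| < n)
    (h₂ : n < min (l + m) (2 * k - l - m))
    (h : Real.sin θ ^ 2 = (Real.cos (Real.pi * n / k) - Real.cos (Real.pi * (l + m) / k)) /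
      (2 * Real.sin (Real.pi * l / k) * Real.sin (Real.pi * m / k))) :
    Real.sin (Real.pi * l / k) ≠ 0 ∧ Real.sin (Real.pi * m / k) ≠ 0 ∧ Real.sin (2 * θ) ≠ 0 ∧
      Real.cos (Real.pi * n / k) = Real.cos (Real.pi * l / k) * Real.cos (Real.pi * m / k) -
        Real.sin (Real.pi * l / k) * Real.sin (Real.pi * m / k) * Real.cos (2 * θ) := by
  obtain ⟨hsub, hadd, hpi⟩ := mul_div_triangle_inequalities Real.pi_pos hk h₁ h₂
  have hl := (sin_pos_of_abs_sub_lt hsub hadd hpi).ne'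
  have hm := (sin_pos_of_abs_sub_lt (abs_sub_comm _ (Real.pi * m / k) ▸ hsub)
    (add_comm _ (Real.pi * m / k) ▸ hadd) (sub_right_comm _ _ (Real.pi * m / k) ▸ hpi)).ne'
  rw [mul_add, add_div] at h
  have hcos := cos_eq_of_sin_sq_eq hl hm h
  exact ⟨hl, hm, sin_ne_zero_of_cos_eq hcos (cos_add_lt_cos_of_abs_sub_lt hsub hadd hpi).ne'
    (cos_lt_cos_sub_of_abs_sub_lt hsub (by linarith)).ne, hcos⟩

end Triangle

theorem stmt19_general (k : ℕ) (lam mu nu θ : ℝ)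
    (hlam : Real.sin (Real.pi * lam / k) ≠ 0) (hmu : Real.sin (Real.pi * mu / k) ≠ 0)
    (hθ : Real.sin (2 * θ) ≠ 0)
    (hnu : Real.cos (Real.pi * nu / k) =
      Real.cos (Real.pi * lam / k) * Real.cos (Real.pi * mu / k) -
        Real.sin (Real.pi * lam / k) * Real.sin (Real.pi * mu / k) * Real.cos (2 * θ)) :
    (∀ h ∈ SU2,
        (h * tmat k lam * h⁻¹, (h * rotY θ) * tmat k mu * (h * rotY θ)⁻¹) ∈
          Tset k lam mu nu) ∧
      (∀ p ∈ Tset k lam mu nu, ∃ h ∈ SU2,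
        p = (h * tmat k lam * h⁻¹, (h * rotY θ) * tmat k mu * (h * rotY θ)⁻¹)) ∧
      (∀ h ∈ SU2, ∀ h' ∈ SU2,
        ((h * tmat k lam * h⁻¹, (h * rotY θ) * tmat k mu * (h * rotY θ)⁻¹) =
          (h' * tmat k lam * h'⁻¹, (h' * rotY θ) * tmat k mu * (h' * rotY θ)⁻¹) ↔
          h' = h ∨ h' = -h)) :=
  ⟨fun _ hh => (conjPair_rotY_mem_Tset_iff hh).mpr hnu,
    fun _ hp => (surjOn_conjPair_rotY hlam hmu hnu hp).imp fun _ ⟨hh, heq⟩ => ⟨hh, heq.symm⟩,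
    fun _ hh _ hh' => conjPair_rotY_eq_iff hlam hmu hθ hh hh'⟩

theorem stmt19 (k : ℕ) (hk : 0 < k) (lam mu nu : ℝ)
    (hlam : lam ∈ Set.Icc (0:ℝ) k) (hmu : mu ∈ Set.Icc (0:ℝ) k)
    (hnu : nu ∈ Set.Icc (0:ℝ) k)
    (h1 : |lam - mu| < nu) (h2 : nu < min (lam + mu) (2 * k - lam - mu))
    (θ : ℝ) (hθ : θ ∈ Set.Icc (0:ℝ) (Real.pi / 2))
    (hsin : (Real.sin θ) ^ 2 =
      (Real.cos (Real.pi * nu / k) - Real.cos (Real.pi * (lam + mu) / k)) /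
        (2 * Real.sin (Real.pi * lam / k) * Real.sin (Real.pi * mu / k))) :
    (∀ h ∈ SU2,
        (h * tmat k lam * h⁻¹, (h * rotY θ) * tmat k mu * (h * rotY θ)⁻¹) ∈
          Tset k lam mu nu) ∧
      (∀ p ∈ Tset k lam mu nu, ∃ h ∈ SU2,
        p = (h * tmat k lam * h⁻¹, (h * rotY θ) * tmat k mu * (h * rotY θ)⁻¹)) ∧
      (∀ h ∈ SU2, ∀ h' ∈ SU2,
        ((h * tmat k lam * h⁻¹, (h * rotY θ) * tmat k mu * (h * rotY θ)⁻¹) =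
          (h' * tmat k lam * h'⁻¹, (h' * rotY θ) * tmat k mu * (h' * rotY θ)⁻¹) ↔
          h' = h ∨ h' = -h)) := by
  obtain ⟨hl, hm, hθ₂, hn⟩ :=
    nondegenerate_of_triangle_inequalities (Nat.cast_pos.mpr hk) h1 h2 hsin
  exact stmt19_general k lam mu nu θ hl hm hθ₂ hn
end
end
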